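/- Let P be a finite poset, S_*(P) ⊆ C̃_*(P) a synor complex for P, x ∈ P, and γ ∈ S_m(P)^{(x)} a principal synor chain (so γ = x*ζ for a cycle ζ). Let 1 ≤ j ≤ ℓ ≤ m and let γ = Σ_{χ ∈ X_ℓ^γ} χ*ζ_χ be the ℓ-representation of γ. Then for every equivalence class [χ] of the relation ∼_j on X_ℓ^γ, one has Σ_{χ′ ∈ [χ]} ζ_{χ′} = 0. -/

import Mathlib

open Finsupp

noncomputable section

variable (K : Type) [Field K]

section Core
variable (P : Type) [Preorder P]

/-- Order chains with `n` elements of the poset `P`, written as strictly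
decreasing tuples `(x₀ > x₁ > ⋯ > x_{n-1})`. -/
def OChain (n : ℕ) : Type := {c : Fin n → P // StrictAnti c}

/-- The chain group in "level" `n`: the `K`-vector space with basis the order chains with
`n` elements.  Level `n` corresponds to homological degree `n - 1`; in particular
`CGrp K P 0 ≅ K` is the reduced part `C̃₋₁`. -/
abbrev CGrp (n : ℕ) : Type := OChain P n →₀ K

/-- Deletion of the `k`-th entry of an order chain. -/
def odel {n : ℕ} (k : Fin (n + 1)) (c : OChain P (n + 1)) : OChain P n :=
  ⟨c.1 ∘ k.succAbove, c.2.comp_strictMono (Fin.strictMono_succAbove k)⟩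

/-- The simplicial boundary map (of the reduced simplicial chain complex of the order
complex), from level `n+1` to level `n`. -/
def cbdry (n : ℕ) : CGrp K P (n + 1) →ₗ[K] CGrp K P n :=
  Finsupp.lsum K fun c => ∑ k : Fin (n + 1), ((-1 : K) ^ (k : ℕ)) • Finsupp.lsingle (odel P k c)

/-- The cycles in level `n` (every level-0 chain, i.e. multiple of the empty chain,
is a cycle). -/
def cyclesAt : (n : ℕ) → Submodule K (CGrp K P n)
  | 0 => ⊤
  | (n + 1) => LinearMap.ker (cbdry K P n)

/-- The boundaries in level `n`. -/
def boundariesIn (n : ℕ) : Submodule K (CGrp K P n) :=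
  LinearMap.range (cbdry K P n)

/-- `H̃_{n-1}(P) ≠ 0`: nontriviality of the reduced simplicial homology (with coefficients
in `K`) of the order complex of `P` in degree `n - 1` (level `n`). -/
def RHomNontrivial (n : ℕ) : Prop := ¬ cyclesAt K P n ≤ boundariesIn K P n

/-- The subspace of chains all of whose elements lie in the subset `J ⊆ P`
(the chain group of the subposet `J`). -/
def chainsIn (J : Set P) (n : ℕ) : Submodule K (CGrp K P n) :=
  Finsupp.supported K K {c : OChain P n | ∀ r, c.1 r ∈ J}

/-- Transport of chain groups along an equality of levels. -/
def castCGrp {a b : ℕ} (h : a = b) : CGrp K P a ≃ₗ[K] CGrp K P b :=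
  Finsupp.domLCongr (Equiv.cast (congrArg (OChain P) h))

end Core


section Synor
variable (P : Type) [PartialOrder P]

/-- For a family `S` of graded pieces (with `S n x` the piece of homological degree `n`,
i.e. level `n+1`, sitting over `x ∈ P`) and a subset `J ⊆ P`, the part of the complex
lying over `J`: at level `0` it is all of `C̃₋₁ = K`, and at level `n+1` it is
`⊕_{x ∈ J} S_n^{(x)}`. -/
def idealPart (S : (n : ℕ) → P → Submodule K (CGrp K P (n + 1))) (J : Set P) :
    (nn : ℕ) → Submodule K (CGrp K P nn)
  | 0 => ⊤
  | (n + 1) => ⨆ x ∈ J, S n x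

/-- A synor complex for the finite poset `P`: a strictly `P`-graded subcomplex
`S_*(P) ⊆ C̃_*(P)` of the reduced simplicial chain complex of the order complex of `P`
(we identify the injective `P`-graded chain map `φ` with the inclusion of its image) with:
`S_i(P) = ⊕_{x ∈ P} S_i(P)^{(x)}` with `S_i(P)^{(x)}` contained in the span of the order
chains with largest element `x` (`graded`); `∂(S_i(P)^{(x)}) ⊆ ⊕_{y<x} S_{i-1}(P)^{(y)}`
(`strict`; for degree `0` the boundary lands in `C̃₋₁ = K` automatically); (S1)
`dim_K S_i(P)^{(x)} = dim_K H̃_{i-1}(P_{<x})` (`dim_eq`, the dimension of the reduced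
homology being the dimension of the cycles minus the dimension of the boundaries); and
(S2) for every order ideal `J ⊆ P` the inclusion `S_*(P)^J ⊆ C̃_*(J)` induces an
isomorphism on homology (`quasiIso`: surjectivity and injectivity of the induced map). -/
structure SynorComplex : Type where
  S : (n : ℕ) → P → Submodule K (CGrp K P (n + 1))
  graded : ∀ (n : ℕ) (x : P),
    S n x ≤ Finsupp.supported K K {c : OChain P (n + 1) | c.1 0 = x}
  strict : ∀ (n : ℕ) (x : P), ∀ f ∈ S (n + 1) x,
    cbdry K P (n + 1) f ∈ ⨆ y ∈ Set.Iio x, S n y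
  dim_eq : ∀ (n : ℕ) (x : P),
    Module.finrank K ↥(S n x) =
      Module.finrank K ↥(cyclesAt K {y : P // y < x} n) -
        Module.finrank K ↥(boundariesIn K {y : P // y < x} n)
  quasiIso : ∀ J : Set P, IsLowerSet J → ∀ nn : ℕ,
    (∀ z ∈ cyclesAt K P nn ⊓ chainsIn K P J nn,
        ∃ a ∈ cyclesAt K P nn ⊓ idealPart K P S J nn,
          z - a ∈ Submodule.map (cbdry K P nn) (chainsIn K P J (nn + 1))) ∧
    (∀ a ∈ idealPart K P S J nn,
        a ∈ Submodule.map (cbdry K P nn) (chainsIn K P J (nn + 1)) →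
        a ∈ Submodule.map (cbdry K P nn) (idealPart K P S J (nn + 1)))

end Synor

section Repr
variable (P : Type) [PartialOrder P]

/-- Concatenation `χ * c` of two order chains, valid when every entry of `c` is strictly
below every entry of `χ`. -/
def concatOC {a b : ℕ} (χ : OChain P a) (c : OChain P b)
    (h : ∀ (s : Fin b) (r : Fin a), c.1 s < χ.1 r) : OChain P (a + b) :=
  ⟨fun r => if hr : (r : ℕ) < a then χ.1 ⟨r, hr⟩
            else c.1 ⟨(r : ℕ) - a, by have := r.2; omega⟩, by
    intro p q hpq
    dsimp only
    rcases lt_or_ge (q : ℕ) a with hq | hq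
    · have hp : (p : ℕ) < a := by have := Fin.lt_def.mp hpq; omega
      rw [dif_pos hp, dif_pos hq]
      exact χ.2 (Fin.mk_lt_mk.mpr (Fin.lt_def.mp hpq))
    · rw [dif_neg (not_lt.mpr hq)]
      rcases lt_or_ge (p : ℕ) a with hp | hp
      · rw [dif_pos hp]
        exact h _ _
      · rw [dif_neg (not_lt.mpr hp)]
        exact c.2 (Fin.mk_lt_mk.mpr (by have := Fin.lt_def.mp hpq; omega))⟩

open Classical in
/-- The linear map `χ * (-)` prepending the order chain `χ` to every order chain of a
chain (declared as `0` on the basis chains that are not entirely below `χ`). -/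
def prependC {a b : ℕ} (χ : OChain P a) : CGrp K P b →ₗ[K] CGrp K P (a + b) :=
  Finsupp.lsum K fun c =>
    if h : ∀ (s : Fin b) (r : Fin a), c.1 s < χ.1 r then
      Finsupp.lsingle (concatOC P χ c h)
    else 0

/-- `X_ℓ^γ` (for `s = ℓ + 1`): the set of order chains with `s` elements occurring as
initial segments of order chains in the support of `γ`. -/
def initSegs {m : ℕ} (γ : CGrp K P (m + 1)) (s : ℕ) (h : s ≤ m + 1) :
    Set (OChain P s) :=
  {χ | ∃ c ∈ γ.support, ∀ r : Fin s, c.1 (Fin.castLE h r) = χ.1 r}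

end Repr

section TupleCoeff

variable {K} {P : Type}

/-- A chain, viewed as a finitely supported function on all tuples (extended by zero to the
tuples that are not strictly decreasing). -/
def tupleCoeff [Preorder P] {n : ℕ} : CGrp K P n →ₗ[K] ((Fin n → P) →₀ K) :=
  Finsupp.lmapDomain K K Subtype.val

theorem tupleCoeff_val [Preorder P] {n : ℕ} (f : CGrp K P n) (c : OChain P n) :
    tupleCoeff f c.1 = f c :=
  Finsupp.mapDomain_apply Subtype.val_injective f c

theorem tupleCoeff_single [Preorder P] {n : ℕ} (c : OChain P n) (a : K) :
    tupleCoeff (Finsupp.single c a) = Finsupp.single c.1 a :=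
  Finsupp.mapDomain_single

theorem tupleCoeff_of_not_strictAnti [Preorder P] {n : ℕ} (f : CGrp K P n) {t : Fin n → P}
    (ht : ¬ StrictAnti t) : tupleCoeff f t = 0 :=
  Finsupp.mapDomain_of_notMem_range _ _ (by rintro ⟨c, rfl⟩; exact ht c.2)

theorem tupleCoeff_of_mem_supported [Preorder P] {n : ℕ} {f : CGrp K P n} {s : Set (OChain P n)}
    (hf : f ∈ Finsupp.supported K K s) {t : Fin n → P} (ht : ∀ c ∈ s, c.1 ≠ t) :
    tupleCoeff f t = 0 := by
  by_cases h : StrictAnti t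
  · rw [show tupleCoeff f t = f ⟨t, h⟩ from tupleCoeff_val f ⟨t, h⟩]
    by_contra h0
    exact ht _ (hf (Finsupp.mem_support_iff.2 h0)) rfl
  · exact tupleCoeff_of_not_strictAnti f h

theorem cbdry_single [Preorder P] {n : ℕ} (c : OChain P (n + 1)) (a : K) :
    cbdry K P n (Finsupp.single c a) =
      ∑ k : Fin (n + 1), (-1 : K) ^ (k : ℕ) • Finsupp.single (odel P k c) a := by
  simp [cbdry]

theorem tupleCoeff_cbdry [Preorder P] [Fintype P] {n : ℕ} (f : CGrp K P (n + 1)) (t : Fin n → P) :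
    tupleCoeff (cbdry K P n f) t =
      ∑ k : Fin (n + 1), (-1 : K) ^ (k : ℕ) *
        ∑ z : P, tupleCoeff f (Fin.insertNth (α := fun _ => P) k z t) := by
  classical
  induction f using Finsupp.induction_linear with
  | zero => simp
  | add f g hf hg => simp [hf, hg, mul_add, Finset.sum_add_distrib]
  | single c a =>
    simp only [cbdry_single, map_sum, map_smul, tupleCoeff_single, Finsupp.finsetSum_apply,
      Finsupp.smul_apply, smul_eq_mul]
    refine Finset.sum_congr rfl fun k _ => ?_
    congr 1
    simp only [Finsupp.single_apply, Fin.eq_insertNth_iff, ite_and, Finset.sum_ite_eq,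
      Finset.mem_univ, if_true]
    rfl

theorem odel_odel [Preorder P] {n : ℕ} (i : Fin (n + 2)) (j : Fin (n + 1))
    (c : OChain P (n + 2)) :
    odel P (j.predAbove i) (odel P (i.succAbove j) c) = odel P j (odel P i c) :=
  Subtype.ext (funext fun k =>
    congrArg c.1 (Fin.succAbove_succAbove_succAbove_predAbove i j k))

theorem cbdry_cbdry [Preorder P] {n : ℕ} (f : CGrp K P (n + 2)) :
    cbdry K P n (cbdry K P (n + 1) f) = 0 := by
  induction f using Finsupp.induction_linear with
  | zero => simp
  | add f g hf hg => simp [hf, hg]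
  | single c a =>
    simp only [cbdry_single, map_sum, map_smul, Finset.smul_sum, smul_smul, ← pow_add]
    rw [← Fintype.sum_prod_type' (f := fun (i : Fin (n + 2)) (j : Fin (n + 1)) =>
      (-1 : K) ^ ((i : ℕ) + (j : ℕ)) • Finsupp.single (odel P j (odel P i c)) a)]
    refine Finset.sum_involution (fun p _ => (p.1.succAbove p.2, p.2.predAbove p.1)) ?_ ?_
      (fun _ _ => Finset.mem_univ _) ?_
    · rintro ⟨i, j⟩ -
      dsimp only
      rw [odel_odel, Fin.neg_one_pow_succAbove_add_predAbove, neg_smul, add_neg_cancel]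
    · rintro ⟨i, j⟩ - - h
      exact Fin.succAbove_ne i j (congrArg Prod.fst h)
    · rintro ⟨i, j⟩ -
      ext <;> simp [Fin.succAbove_succAbove_predAbove, Fin.predAbove_predAbove_succAbove]

theorem tupleCoeff_castCGrp [Preorder P] {a b : ℕ} (h : a = b) (f : CGrp K P a) (t : Fin b → P) :
    tupleCoeff (castCGrp K P h f) t = tupleCoeff f (t ∘ Fin.cast h) := by
  subst h
  congr 2
  ext c
  simp [castCGrp]

theorem concatOC_val [PartialOrder P] {a b : ℕ} (χ : OChain P a) (c : OChain P b)
    (h : ∀ (s : Fin b) (r : Fin a), c.1 s < χ.1 r) :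
    (concatOC P χ c h).1 = Fin.append χ.1 c.1 := by
  funext r
  induction r using Fin.addCases <;> simp [concatOC]

theorem append_eq_append_iff {a b : ℕ} {u u' : Fin a → P} {v v' : Fin b → P} :
    Fin.append u v = Fin.append u' v' ↔ u = u' ∧ v = v' :=
  (Fin.appendEquiv a b).injective.eq_iff (a := (u, v)) (b := (u', v')) |>.trans Prod.ext_iff

open Classical in
theorem tupleCoeff_prependC [PartialOrder P] {a b : ℕ} (χ : OChain P a) (f : CGrp K P b)
    (u : Fin a → P) (v : Fin b → P) :
    tupleCoeff (prependC K P χ f) (Fin.append u v) =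
      if χ.1 = u ∧ ∀ s r, v s < u r then tupleCoeff f v else 0 := by
  induction f using Finsupp.induction_linear with
  | zero => simp
  | add f g hf hg => simp only [map_add, Finsupp.add_apply, hf, hg]; split_ifs <;> simp
  | single c k =>
    simp only [prependC, Finsupp.lsum_single]
    split_ifs with h h' h'
    · simp [tupleCoeff_single, concatOC_val, Finsupp.single_apply, append_eq_append_iff, h'.1]
    · simp only [Finsupp.lsingle_apply, tupleCoeff_single, concatOC_val, Finsupp.single_apply,
        append_eq_append_iff]
      refine if_neg ?_
      rintro ⟨rfl, rfl⟩
      exact h' ⟨rfl, h⟩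
    · obtain ⟨rfl, h'⟩ := h'
      simp only [LinearMap.zero_apply, map_zero, Finsupp.zero_apply, tupleCoeff_single,
        Finsupp.single_apply]
      refine (if_neg ?_).symm
      rintro rfl
      exact h h'
    · simp

end TupleCoeff

namespace SynorComplex

variable {K} {P : Type} [PartialOrder P] (σ : SynorComplex K P)

theorem tupleCoeff_of_zero_ne {m : ℕ} {x : P} {γ : CGrp K P (m + 1)} (hγ : γ ∈ σ.S m x)
    {t : Fin (m + 1) → P} (ht : t 0 ≠ x) : tupleCoeff γ t = 0 :=
  tupleCoeff_of_mem_supported (σ.graded m x hγ) (by rintro c hc rfl; exact ht hc)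

theorem iSup_Iio_le_supported (m : ℕ) (x : P) :
    ⨆ y ∈ Set.Iio x, σ.S m y ≤ Finsupp.supported K K {c : OChain P (m + 1) | c.1 0 ≠ x} :=
  iSup₂_le fun y hy => (σ.graded m y).trans
    (Finsupp.supported_mono fun c (hc : c.1 0 = y) => (hc.trans_lt hy).ne)

/-- A principal chain over `x` in positive degree is the cone with apex `x` over its boundary. -/
theorem tupleCoeff_cons [Fintype P] {m : ℕ} {x : P} {γ : CGrp K P (m + 2)}
    (hγ : γ ∈ σ.S (m + 1) x) (t : Fin (m + 1) → P) :
    tupleCoeff γ (Fin.cons x t) = tupleCoeff (cbdry K P (m + 1) γ) t := by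
  by_cases ht : t 0 = x
  · rw [tupleCoeff_of_mem_supported (σ.iSup_Iio_le_supported m x (σ.strict m x γ hγ))
      (by rintro c hc rfl; exact hc ht)]
    refine tupleCoeff_of_not_strictAnti _ fun h => ?_
    have := h (Fin.zero_lt_one (n := m))
    rw [← Fin.succ_zero_eq_one, Fin.cons_succ, Fin.cons_zero, ht] at this
    exact this.false
  · rw [tupleCoeff_cbdry, Fin.sum_univ_succ, Finset.sum_eq_zero (s := Finset.univ)
      (f := fun i : Fin (m + 1) => _), add_zero]
    · rw [Finset.sum_eq_single x]
      · simp
      · intro z _ hz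
        exact σ.tupleCoeff_of_zero_ne hγ (by simpa using hz)
      · simp
    · intro k _
      rw [Finset.sum_eq_zero, mul_zero]
      intro z _
      refine σ.tupleCoeff_of_zero_ne hγ ?_
      rw [← Fin.cons_self_tail t, Fin.insertNth_succ_cons]
      simpa using ht

theorem sum_tupleCoeff_cons [Fintype P] {m : ℕ} {g : CGrp K P (m + 1)} {J : Set P}
    (hg : g ∈ ⨆ y ∈ J, σ.S m y) (t : Fin m → P) :
    ∑ z : P, tupleCoeff g (Fin.cons z t) = tupleCoeff (cbdry K P m g) t := by
  cases m with
  | zero => simp [tupleCoeff_cbdry]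
  | succ m =>
    suffices h : ⨆ y ∈ J, σ.S (m + 1) y ≤ LinearMap.eqLocus
        (∑ z : P, Finsupp.lapply (Fin.cons z t) ∘ₗ tupleCoeff (K := K) (P := P))
        (Finsupp.lapply t ∘ₗ tupleCoeff ∘ₗ cbdry K P (m + 1)) by simpa using h hg
    refine iSup₂_le fun y _ f hf => ?_
    rw [LinearMap.mem_eqLocus]
    simp only [LinearMap.sum_apply, LinearMap.comp_apply, Finsupp.lapply_apply]
    rw [Finset.sum_eq_single y, σ.tupleCoeff_cons hf]
    · intro z _ hz
      exact σ.tupleCoeff_of_zero_ne hf (by simpa using hz)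
    · simp

/-- For a principal chain, the coefficients of the tuples obtained by inserting an arbitrary
entry at a fixed positive position sum to zero. -/
theorem sum_tupleCoeff_insertNth [Fintype P] {m : ℕ} {x : P} {γ : CGrp K P (m + 1)}
    (hγ : γ ∈ σ.S m x) {k : Fin (m + 1)} (hk : k ≠ 0) (t : Fin m → P) :
    ∑ z : P, tupleCoeff γ (Fin.insertNth (α := fun _ => P) k z t) = 0 := by
  induction m generalizing x with
  | zero => exact absurd (Fin.fin_one_eq_zero k) hk
  | succ m ih =>
    obtain ⟨k, rfl⟩ := Fin.exists_succ_eq.2 hk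
    obtain ⟨y, t, rfl⟩ : ∃ y s, t = Fin.cons y s := ⟨_, _, (Fin.cons_self_tail t).symm⟩
    simp only [Fin.insertNth_succ_cons]
    by_cases hy : y = x
    · subst hy
      simp only [σ.tupleCoeff_cons hγ]
      have hb := σ.strict m y γ hγ
      by_cases hk0 : k = 0
      · subst hk0
        simp only [Fin.insertNth_zero']
        rw [σ.sum_tupleCoeff_cons hb, cbdry_cbdry, map_zero, Finsupp.zero_apply]
      · suffices h : ⨆ z ∈ Set.Iio y, σ.S m z ≤ LinearMap.ker
            (∑ z : P, Finsupp.lapply (Fin.insertNth (α := fun _ => P) k z t) ∘ₗ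
              tupleCoeff (K := K) (P := P)) by simpa using h hb
        refine iSup₂_le fun z _ f hf => ?_
        simpa using ih hf hk0 t
    · exact Finset.sum_eq_zero fun z _ => σ.tupleCoeff_of_zero_ne hγ (by simpa using hy)

end SynorComplex

theorem append_update_left {P : Type} {a b : ℕ} (u : Fin a → P) (v : Fin b → P) (j : Fin a)
    (z : P) : Fin.append (Function.update u j z) v =
      Function.update (Fin.append u v) (Fin.castAdd b j) z := by
  funext r
  induction r using Fin.addCases with
  | left r => simp [Function.update_apply]
  | right r =>
    rw [Fin.append_right, Function.update_of_ne, Fin.append_right]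
    simp [Fin.ext_iff]; omega

/-- The coefficients of the suffixes in a representation of a chain by prefixes are the
coefficients of the chain itself. -/
theorem suffix_apply_eq_tupleCoeff {K : Type} [Field K] {P : Type} [PartialOrder P] {a b n : ℕ}
    [Fintype (OChain P a)] (h : a + b = n) (ζ : OChain P a → CGrp K P b)
    (hsupp : ∀ χ : OChain P a, ζ χ ∈ Finsupp.supported K K
      {c : OChain P b | ∀ (s : Fin b) (r : Fin a), c.1 s < χ.1 r})
    (χ : OChain P a) (c : OChain P b) :
    tupleCoeff (∑ χ', castCGrp K P h (prependC K P χ' (ζ χ')))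
      (Fin.append χ.1 c.1 ∘ Fin.cast h.symm) = ζ χ c := by
  classical
  have hcast : (Fin.append χ.1 c.1 ∘ Fin.cast h.symm) ∘ Fin.cast h = Fin.append χ.1 c.1 := rfl
  simp only [map_sum, Finsupp.finsetSum_apply, tupleCoeff_castCGrp, hcast, tupleCoeff_prependC]
  rw [Finset.sum_eq_single χ]
  · rw [tupleCoeff_val]
    split_ifs with hc
    · rfl
    · by_contra h0
      exact hc ⟨rfl, hsupp χ (Finsupp.mem_support_iff.2 (Ne.symm h0))⟩
  · intro χ' _ hne
    exact if_neg fun h' => hne (Subtype.ext h'.1)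
  · simp

/-- Summing a function on tuples over the strictly decreasing tuples agreeing with `u` away from
position `j` amounts to summing over all entries at position `j`. -/
theorem sum_agree_eq_sum_update {M P : Type} [AddCommMonoid M] [PartialOrder P] [Fintype P]
    {n : ℕ} [Fintype (OChain P n)] (G : (Fin n → P) → M) (hG : ∀ t, ¬ StrictAnti t → G t = 0)
    (u : Fin n → P) (j : Fin n) [DecidablePred fun χ : OChain P n => ∀ r, r ≠ j → χ.1 r = u r] :
    ∑ χ : OChain P n with ∀ r, r ≠ j → χ.1 r = u r, G χ.1 =
      ∑ z : P, G (Function.update u j z) := by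
  have hupd (χ : OChain P n) (h : ∀ r, r ≠ j → χ.1 r = u r) :
      Function.update u j (χ.1 j) = χ.1 :=
    Function.update_eq_iff.2 ⟨rfl, fun r hr => (h r hr).symm⟩
  refine Finset.sum_bij_ne_zero (fun χ _ _ => χ.1 j) (fun _ _ _ => Finset.mem_univ _) ?_ ?_ ?_
  · intro χ hχ _ χ' hχ' _ h
    have h1 := hupd χ (Finset.mem_filter.1 hχ).2
    have h2 := hupd χ' (Finset.mem_filter.1 hχ').2
    exact Subtype.ext (h1.symm.trans ((congrArg _ h).trans h2))
  · intro z _ hz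
    have hs : StrictAnti (Function.update u j z) := by
      by_contra h
      exact hz (hG _ h)
    exact ⟨⟨_, hs⟩, Finset.mem_filter.2
      ⟨Finset.mem_univ _, fun r hr => Function.update_of_ne hr _ _⟩, hz, Function.update_self ..⟩
  · intro χ hχ _
    rw [hupd χ (Finset.mem_filter.1 hχ).2]

/-- Let `P` be a finite poset, `S_*(P) ⊆ C̃_*(P)` a synor complex,
`x ∈ P`, `γ ∈ S_m(P)^{(x)}` a principal synor chain, `1 ≤ j ≤ ℓ ≤ m`, and let
`γ = Σ_{χ ∈ X_ℓ^γ} χ * ζ_χ` be the `ℓ`-representation of `γ` (here encoded by the data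
of the suffixes `ζ_χ`, supported strictly below `χ`, vanishing outside `X_ℓ^γ`, which
determines the `ℓ`-representation uniquely).  Then for every equivalence class `[χ]` of
the relation `∼_j` on `X_ℓ^γ` (agreement in all positions except possibly position `j`)
one has `Σ_{χ' ∈ [χ]} ζ_{χ'} = 0`. -/
theorem ell_representation_class_sum (P : Type) [PartialOrder P] [Fintype P]
    (σ : SynorComplex K P) (m ℓ : ℕ) (hℓm : ℓ ≤ m) (x : P)
    (γ : CGrp K P (m + 1)) (hγ : γ ∈ σ.S m x)
    (j : Fin (ℓ + 1)) (hj : 1 ≤ (j : ℕ))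
    (ζ : OChain P (ℓ + 1) → CGrp K P (m - ℓ))
    (hsupp : ∀ χ : OChain P (ℓ + 1), ζ χ ∈ Finsupp.supported K K
      {c : OChain P (m - ℓ) | ∀ (s : Fin (m - ℓ)) (r : Fin (ℓ + 1)), c.1 s < χ.1 r})
    (hzero : ∀ χ ∉ initSegs K P γ (ℓ + 1) (by omega), ζ χ = 0)
    (hrep : γ = ∑ᶠ χ ∈ initSegs K P γ (ℓ + 1) (by omega),
      castCGrp K P (by omega) (prependC K P χ (ζ χ)))
    (χ₀ : OChain P (ℓ + 1)) (hχ₀ : χ₀ ∈ initSegs K P γ (ℓ + 1) (by omega)) :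
    ∑ᶠ χ' ∈ {χ' : OChain P (ℓ + 1) | χ' ∈ initSegs K P γ (ℓ + 1) (by omega) ∧
        ∀ r : Fin (ℓ + 1), r ≠ j → χ'.1 r = χ₀.1 r},
      ζ χ' = 0 := by
  classical
  have : Fintype (OChain P (ℓ + 1)) :=
    inferInstanceAs (Fintype {c : Fin (ℓ + 1) → P // StrictAnti c})
  have hn : ℓ + 1 + (m - ℓ) = m + 1 := by omega
  have hrep' : γ = ∑ χ, castCGrp K P hn (prependC K P χ (ζ χ)) := by
    rw [← finsum_eq_sum_of_fintype]
    refine hrep.trans (finsum_congr fun χ => ?_)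
    by_cases hχ : χ ∈ initSegs K P γ (ℓ + 1) (by omega)
    · simp [hχ]
    · simp [hχ, hzero χ hχ]
  have hζ (χ : OChain P (ℓ + 1)) (c : OChain P (m - ℓ)) :
      ζ χ c = tupleCoeff γ (Fin.append χ.1 c.1 ∘ Fin.cast hn.symm) := by
    conv_rhs => rw [hrep']
    exact (suffix_apply_eq_tupleCoeff hn ζ hsupp χ c).symm
  have hsum : ∑ᶠ χ' ∈ {χ' : OChain P (ℓ + 1) | χ' ∈ initSegs K P γ (ℓ + 1) (by omega) ∧
      ∀ r : Fin (ℓ + 1), r ≠ j → χ'.1 r = χ₀.1 r}, ζ χ' =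
      ∑ χ : OChain P (ℓ + 1) with ∀ r, r ≠ j → χ.1 r = χ₀.1 r, ζ χ := by
    rw [Finset.sum_filter, ← finsum_eq_sum_of_fintype]
    refine finsum_congr fun χ => ?_
    by_cases hχ : χ ∈ initSegs K P γ (ℓ + 1) (by omega)
    · simp [hχ, finsum_eq_if]
    · simp [hχ, hzero χ hχ]
  rw [hsum]
  ext c
  rw [Finsupp.finsetSum_apply, Finsupp.zero_apply]
  simp only [hζ]
  rw [sum_agree_eq_sum_update
    (fun u => tupleCoeff γ (Fin.append u c.1 ∘ Fin.cast hn.symm)) ?_ χ₀.1 j]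
  · rw [← σ.sum_tupleCoeff_insertNth hγ (k := Fin.cast hn (Fin.castAdd _ j))
      (Fin.ne_of_val_ne (Nat.one_le_iff_ne_zero.1 hj))
      (Fin.removeNth _ (Fin.append χ₀.1 c.1 ∘ Fin.cast hn.symm))]
    refine Finset.sum_congr rfl fun z _ => ?_
    rw [Fin.insertNth_removeNth, append_update_left]
    congr 1
    exact Function.update_comp_equiv _ (finCongr hn.symm) _ _
  · refine fun u hu => tupleCoeff_of_not_strictAnti _ fun h => hu fun p q hpq => ?_
    simpa using h (a := Fin.cast hn (Fin.castAdd _ p)) (b := Fin.cast hn (Fin.castAdd _ q)) hpq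

end
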